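/- The length of the shortest word in the intersection of the languages of one pushdown automaton of size O(n) and n finite-state automata each of size O(n) can be double exponential in n: for each n there exist such automata whose intersection is nonempty and whose shortest common word has length at least 2^{2^n}. -/

import Mathlib

/-- A stack operation of a pushdown automaton. -/
inductive StackOp (Γ : Type*) where
  | push (γ : Γ)
  | pop (γ : Γ)
  | nop

/-- The effect of a stack operation: `op.apply s s'` means performing `op`
on stack `s` yields stack `s'`. -/
def StackOp.apply {Γ : Type*} : StackOp Γ → List Γ → List Γ → Prop
  | .push γ, s, s' => s' = γ :: s
  | .pop γ, s, s' => s = γ :: s'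
  | .nop, s, s' => s' = s

/-- A pushdown automaton with states `Q`, stack symbols `Γ` and input alphabet `σ`.
Transitions read a letter or `ε` (`Option σ`) and perform one stack operation. -/
structure PDA (Q Γ σ : Type*) where
  trans : Set (Q × Option σ × StackOp Γ × Q)
  start : Q
  final : Set Q

/-- `P.Steps c w c' h` : there is a run of `P` from configuration `c` to `c'`
reading the word `w`, whose maximal stack height (over all configurations
of the run, endpoints included) is `h`. -/
inductive PDA.Steps {Q Γ σ : Type*} (P : PDA Q Γ σ) :
    Q × List Γ → List σ → Q × List Γ → ℕ → Prop where
  | refl (c : Q × List Γ) : PDA.Steps P c [] c c.2.length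
  | step {q q' : Q} {a : Option σ} {op : StackOp Γ} {s s' : List Γ}
      {w : List σ} {c : Q × List Γ} {h : ℕ} :
      (q, a, op, q') ∈ P.trans → op.apply s s' →
      PDA.Steps P (q', s') w c h →
      PDA.Steps P (q, s) (a.toList ++ w) c (max s.length h)

/-- The language of a PDA: acceptance by final state and empty stack,
starting from the initial state with empty stack. -/
def PDA.language {Q Γ σ : Type*} (P : PDA Q Γ σ) : Set (List σ) :=
  {w | ∃ f ∈ P.final, ∃ h, P.Steps (P.start, []) w (f, []) h}
/-- The alphabet `{0,1} ∪ {inc, dec} ∪ Γ₂`. -/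
inductive CtrSym (Γ : Type*) where
  | bit (b : Bool)
  | inc
  | dec
  | letter (g : Γ)
deriving DecidableEq

/-- Value of an `ℓ`-bit string, most significant bit first. -/
def bitsVal (bs : List Bool) : ℤ :=
  bs.foldl (fun acc b => 2 * acc + (if b then 1 else 0)) 0

/-- The operators: `inc` increments, `dec` decrements, letters of `Γ₂` keep
the value unchanged. (`bit` is not an operator.) -/
def CtrSym.isOp {Γ : Type*} : CtrSym Γ → Prop
  | .bit _ => False
  | _ => True

/-- Application of an operator to a value. -/
def CtrSym.applyOp {Γ : Type*} : CtrSym Γ → ℤ → ℤ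
  | .inc, v => v + 1
  | .dec, v => v - 1
  | _, v => v

/-- `ValidSeq ℓ prev l` : the sequence of (operator, ℓ-bit number) pairs `l` is a
valid counting sequence starting from the previous ℓ-bit number `prev`, where each
number is congruent modulo `2^ℓ` to the operator applied to the previous one. -/
def ValidSeq {Γ : Type*} (ℓ : ℕ) : List Bool → List (CtrSym Γ × List Bool) → Prop
  | _, [] => True
  | prev, (o, n) :: rest =>
      o.isOp ∧ n.length = ℓ ∧
      bitsVal n % (2 ^ ℓ : ℤ) = o.applyOp (bitsVal prev) % (2 ^ ℓ : ℤ) ∧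
      ValidSeq ℓ n rest

/-- The language `L_ℓ` of alternating sequences `n₀ o₁ n₁ o₂ n₂ ⋯ o_k n_k` of ℓ-bit
numbers and operators, where each operator applied to the previous number gives
the next number modulo `2^ℓ`. -/
def LCtr (Γ : Type*) (ℓ : ℕ) : Set (List (CtrSym Γ)) :=
  {w | ∃ (n₀ : List Bool) (rest : List (CtrSym Γ × List Bool)),
    n₀.length = ℓ ∧ ValidSeq ℓ n₀ rest ∧
    w = n₀.map CtrSym.bit ++ (rest.map fun p => p.1 :: p.2.map CtrSym.bit).flatten}

/-!
One fixed pushdown automaton walks through a full binary tree in depth-first order. It reads `dec`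
when it enters the first child of a node and `inc` when it leaves the second child, so that a
counter started at `2 ^ n - 1` holds the height of the node being visited. The counter is
distributed over `n` finite automata, the `i`-th of which stores bit `i`. The carry is made local by
letting the word announce, as a block of `letter`s before each operator, the index `k` of the
highest bit that changes: every automaton can then check and update its own bit knowing only whether
`i < k`, `i = k` or `k < i`. A leaf is read with a `bit`, which the automata permit only when all
their bits are zero. A common word therefore traverses the full tree of height `2 ^ n - 1`.
-/

section Automata

variable {Q Q' Γ Γ' σ : Type*}

namespace PDA

/-- `P.Reaches c w c'`: some run of `P` from `c` to `c'` reads `w`. This is `PDA.Steps` with the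
maximal stack height forgotten. -/
def Reaches (P : PDA Q Γ σ) (c : Q × List Γ) (w : List σ) (c' : Q × List Γ) : Prop :=
  ∃ h, P.Steps c w c' h

variable {P : PDA Q Γ σ}

theorem mem_language_iff {w : List σ} :
    w ∈ P.language ↔ ∃ q ∈ P.final, P.Reaches (P.start, []) w (q, []) :=
  Iff.rfl

namespace Reaches

theorem refl (c : Q × List Γ) : P.Reaches c [] c :=
  ⟨_, .refl c⟩

theorem head {q q' : Q} {a : Option σ} {op : StackOp Γ} {s s' : List Γ} {w : List σ}
    {c : Q × List Γ} (ht : (q, a, op, q') ∈ P.trans) (hop : op.apply s s')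
    (hw : P.Reaches (q', s') w c) : P.Reaches (q, s) (a.toList ++ w) c :=
  let ⟨_, hw⟩ := hw
  ⟨_, .step ht hop hw⟩

theorem head_induction {c' : Q × List Γ} {motive : ∀ c w, P.Reaches c w c' → Prop}
    (refl : motive c' [] (.refl c'))
    (head : ∀ {q q' : Q} {a : Option σ} {op : StackOp Γ} {s s' : List Γ} {w : List σ}
      (ht : (q, a, op, q') ∈ P.trans) (hop : op.apply s s') (hw : P.Reaches (q', s') w c'),
        motive (q', s') w hw → motive (q, s) (a.toList ++ w) (hw.head ht hop))
    {c : Q × List Γ} {w : List σ} (h : P.Reaches c w c') : motive c w h := by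
  obtain ⟨_, h⟩ := h
  induction h with
  | refl c => exact refl
  | step ht hop hw ih => exact head ht hop ⟨_, hw⟩ (ih refl head)

theorem trans {c c' c'' : Q × List Γ} {u v : List σ} (hu : P.Reaches c u c')
    (hv : P.Reaches c' v c'') : P.Reaches c (u ++ v) c'' := by
  induction hu using head_induction with
  | refl => exact hv
  | head ht hop _ ih =>
    rw [List.append_assoc]
    exact ih.head ht hop

theorem single {q q' : Q} {a : Option σ} {op : StackOp Γ} {s s' : List Γ}
    (ht : (q, a, op, q') ∈ P.trans) (hop : op.apply s s') :
    P.Reaches (q, s) a.toList (q', s') := by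
  simpa using (refl (q', s')).head ht hop

end Reaches

end PDA

/-- Renaming of the stack symbol in a stack operation. -/
def StackOp.map (f : Γ → Γ') : StackOp Γ → StackOp Γ'
  | .push γ => .push (f γ)
  | .pop γ => .pop (f γ)
  | .nop => .nop

theorem StackOp.map_map_of_leftInverse {e : Γ → Γ'} {t : Γ' → Γ} (ht : Function.LeftInverse t e)
    (op : StackOp Γ) : (op.map e).map t = op := by
  cases op <;> simp [StackOp.map, ht _]

theorem StackOp.apply_map {op : StackOp Γ} {s s' : List Γ} (f : Γ → Γ') (h : op.apply s s') :
    (op.map f).apply (s.map f) (s'.map f) := by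
  cases op <;> simp_all [StackOp.apply, StackOp.map]

theorem PDA.Reaches.map {P : PDA Q Γ σ} {P' : PDA Q' Γ' σ} {f : Q → Q'} {e : Γ → Γ'}
    (hf : ∀ {q a op q'}, (q, a, op, q') ∈ P.trans → (f q, a, op.map e, f q') ∈ P'.trans)
    {c c' : Q × List Γ} {w : List σ} (h : P.Reaches c w c') :
    P'.Reaches (f c.1, c.2.map e) w (f c'.1, c'.2.map e) := by
  induction h using head_induction with
  | refl => exact .refl _
  | head ht hop _ ih => exact ih.head (hf ht) (StackOp.apply_map e hop)

-- States and stack symbols outside the image of the embedding behave as copies of those inside,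
-- through a retraction: then both inclusions of languages follow by mapping runs.
theorem PDA.exists_language_eq_of_leftInverse (P : PDA Q Γ σ) {f : Q → Q'} {r : Q' → Q}
    (hr : Function.LeftInverse r f) {e : Γ → Γ'} {t : Γ' → Γ} (ht : Function.LeftInverse t e) :
    ∃ P' : PDA Q' Γ' σ, P'.language = P.language := by
  refine ⟨⟨{x | (r x.1, x.2.1, x.2.2.1.map t, r x.2.2.2) ∈ P.trans}, f P.start, r ⁻¹' P.final⟩,
    Set.ext fun w => ⟨?_, ?_⟩⟩
  · rintro ⟨q, hq, h⟩
    have mapped := PDA.Reaches.map (P' := P) (f := r) (e := t) (fun h => h) h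
    simp only [hr _] at mapped
    exact ⟨r q, hq, mapped⟩
  · rintro ⟨q, hq, h⟩
    refine ⟨f q, by simpa [hr _] using hq, PDA.Reaches.map (e := e) (fun h => ?_) h⟩
    simpa [hr _, StackOp.map_map_of_leftInverse ht] using h

theorem exists_dfa_accepts_eq_of_leftInverse (A : DFA σ Q) {f : Q → Q'} {r : Q' → Q}
    (hr : Function.LeftInverse r f) : ∃ B : DFA σ Q', B.accepts = A.accepts := by
  let B : DFA σ Q' := ⟨fun q a => f (A.step (r q) a), f A.start, r ⁻¹' A.accept⟩
  have evalFrom_eq (w : List σ) (q : Q') : r (B.evalFrom q w) = A.evalFrom (r q) w := by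
    induction w generalizing q with
    | nil => rfl
    | cons a w ih => rw [DFA.evalFrom_cons, DFA.evalFrom_cons, ih, hr]
  refine ⟨B, Set.ext fun w => ?_⟩
  change r (B.evalFrom (f A.start) w) ∈ A.accept ↔ A.evalFrom A.start w ∈ A.accept
  rw [evalFrom_eq, hr]

theorem exists_leftInverse_fin_of_card_le [Fintype Q] [Nonempty Q] {m : ℕ}
    (h : Fintype.card Q ≤ m) : ∃ (f : Q → Fin m) (r : Fin m → Q), Function.LeftInverse r f := by
  obtain ⟨f⟩ : Nonempty (Q ↪ Fin m) := Function.Embedding.nonempty_of_card_le (by simpa using h)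
  exact ⟨f, Function.invFun f, Function.leftInverse_invFun f.injective⟩

end Automata

namespace TreeTraversal

/-! ### Binary counters with announced carry position -/

section Bits

variable {n : ℕ}

/-- Bit `i` after an increment whose highest changed bit is `k`, when it was `b` before; `none` if
`b` contradicts this choice of `k`, that is, unless bits below `k` are `1` and bit `k` is `0`. -/
def incBit (i k : Fin n) (b : Bool) : Option Bool :=
  if k < i then some b else if b = decide (i ≠ k) then some !b else none

/-- Bit `i` after a decrement whose highest changed bit is `k`, when it was `b` before; `none` if
`b` contradicts this choice of `k`, that is, unless bits below `k` are `0` and bit `k` is `1`. -/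
def decBit (i k : Fin n) (b : Bool) : Option Bool :=
  if k < i then some b else if b = decide (i = k) then some !b else none

theorem decBit_eq_some_iff {i k : Fin n} {b b' : Bool} :
    decBit i k b = some b' ↔ incBit i k b' = some b := by
  unfold decBit incBit
  by_cases h : i = k <;> cases b <;> cases b' <;> simp [h]

theorem incBit_succ_succ (i k : Fin n) (b : Bool) : incBit i.succ k.succ b = incBit i k b := by
  simp [incBit]

theorem ofBits_eq_add_one_of_incBit {k : Fin n} {b b' : Fin n → Bool}
    (h : ∀ i, incBit i k (b i) = some (b' i)) : Nat.ofBits b' = Nat.ofBits b + 1 := by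
  induction n with
  | zero => exact k.elim0
  | succ n ih =>
    rw [Nat.ofBits_succ, Nat.ofBits_succ]
    cases k using Fin.cases with
    | zero =>
      have tail_eq : b' ∘ Fin.succ = b ∘ Fin.succ :=
        funext fun i => by simpa [incBit, eq_comm] using h i.succ
      have bit_zero : b 0 = false ∧ b' 0 = true := by
        have := h 0
        grind [incBit]
      simp [tail_eq, bit_zero]
    | succ k =>
      have tail_inc := ih (k := k) (b := b ∘ Fin.succ) (b' := b' ∘ Fin.succ)
        fun i => by simpa only [incBit_succ_succ, Function.comp_apply] using h i.succ
      have bit_zero : b 0 = true ∧ b' 0 = false := by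
        have := h 0
        grind [incBit]
      simp [tail_inc, bit_zero, mul_add]

theorem ofBits_eq_zero_iff {b : Fin n → Bool} : Nat.ofBits b = 0 ↔ ∀ i, b i = false := by
  constructor
  · intro h i
    rw [← Nat.testBit_ofBits_lt b i i.isLt, h, Nat.zero_testBit]
  · intro h
    rw [show b = fun i : Fin n => Nat.testBit 0 i from funext fun i => by simp [h],
      Nat.ofBits_testBit, Nat.zero_mod]

theorem ofBits_true : Nat.ofBits (fun _ : Fin n => true) = 2 ^ n - 1 := by
  have all_bits : (fun _ : Fin n => true) = fun i : Fin n => (2 ^ n - 1).testBit i := by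
    ext i; simp [Nat.testBit_two_pow_sub_one]
  rw [all_bits, Nat.ofBits_testBit, Nat.mod_eq_of_lt]
  exact Nat.sub_lt (by positivity) one_pos

theorem exists_decBit {b : Fin n → Bool} (h : Nat.ofBits b ≠ 0) :
    ∃ (k : Fin n) (b' : Fin n → Bool), ∀ i, decBit i k (b i) = some (b' i) := by
  have exists_true : {i | b i = true}.Nonempty := by
    by_contra! h0
    exact h (ofBits_eq_zero_iff.2 fun i => by simpa using Set.eq_empty_iff_forall_notMem.1 h0 i)
  obtain ⟨k, hk, lowest⟩ := wellFounded_lt.has_min _ exists_true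
  refine ⟨k, fun i => if k < i then b i else !b i, fun i => ?_⟩
  rcases lt_trichotomy i k with hi | rfl | hi
  · have : b i = false := by simpa using fun hb => lowest i hb hi
    simp [decBit, this, hi.ne, hi.not_gt]
  · have : b i = true := hk
    simp [decBit, this]
  · simp [decBit, hi]

end Bits

/-! ### The finite automata -/

section BitDFA

variable {n : ℕ} [NeZero n]

/-- Transition of the `i`-th automaton. A state `(k, b)` consists of the announced carry position
`k`, which each `letter` advances (cyclically), and the stored bit `b`. -/
def bitStep (i : Fin n) : CtrSym Unit → Fin n × Bool → Option (Fin n × Bool)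
  | .letter _, (k, b) => some (k + 1, b)
  | .inc, (k, b) => (incBit i k b).map (0, ·)
  | .dec, (k, b) => (decBit i k b).map (0, ·)
  | .bit _, (k, b) => if b then none else some (k, b)

/-- The `i`-th finite automaton, keeping bit `i` of a counter that starts with all bits set. The
state `none` is a rejecting sink, and all other states accept. -/
def bitDFA (i : Fin n) : DFA (CtrSym Unit) (Option (Fin n × Bool)) where
  step s a := s.bind (bitStep i a)
  start := some (0, true)
  accept := {none}ᶜ

theorem bitDFA_step_some (i : Fin n) (p : Fin n × Bool) (a : CtrSym Unit) :
    (bitDFA i).step (some p) a = bitStep i a p :=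
  rfl

theorem bitDFA_evalFrom_none (i : Fin n) (w : List (CtrSym Unit)) :
    (bitDFA i).evalFrom none w = none := by
  induction w with
  | nil => rfl
  | cons _ _ ih => exact ih

theorem bitDFA_evalFrom_letters (i k : Fin n) (b : Bool) (m : ℕ) :
    (bitDFA i).evalFrom (some (k, b)) (List.replicate m (.letter ())) =
      some (k + Fin.ofNat n m, b) := by
  induction m generalizing k with
  | zero => simp
  | succ m ih =>
    have ofNat_succ : Fin.ofNat n (m + 1) = 1 + Fin.ofNat n m := by
      ext; simp [Fin.val_add, add_comm]
    rw [List.replicate_succ, DFA.evalFrom_cons, bitDFA_step_some, bitStep, ih, ofNat_succ,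
      add_assoc]

/-- `Survives i p w`: the `i`-th automaton, started in the state `p`, accepts `w`. -/
def Survives (i : Fin n) (p : Fin n × Bool) (w : List (CtrSym Unit)) : Prop :=
  (bitDFA i).evalFrom (some p) w ≠ none

theorem survives_cons {i : Fin n} {p : Fin n × Bool} {a : CtrSym Unit} {w : List (CtrSym Unit)} :
    Survives i p (a :: w) ↔ ∃ p', bitStep i a p = some p' ∧ Survives i p' w := by
  rw [Survives, DFA.evalFrom_cons, bitDFA_step_some]
  cases bitStep i a p <;> simp [Survives, bitDFA_evalFrom_none]

end BitDFA

/-! ### Abstract counter runs -/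

/-- `IsCounterRun v w`: the operators of `w`, applied successively to a natural number which is `v`
at first, never decrement zero, and a bit is read only when the value is zero. -/
def IsCounterRun {Γ : Type*} : ℕ → List (CtrSym Γ) → Prop
  | _, [] => True
  | v, .letter _ :: w => IsCounterRun v w
  | v, .inc :: w => IsCounterRun (v + 1) w
  | v, .dec :: w => ∃ u, v = u + 1 ∧ IsCounterRun u w
  | v, .bit _ :: w => v = 0 ∧ IsCounterRun v w

theorem isCounterRun_ofBits {n : ℕ} [NeZero n] {w : List (CtrSym Unit)} {k : Fin n}
    {b : Fin n → Bool} (h : ∀ i, Survives i (k, b i) w) : IsCounterRun (Nat.ofBits b) w := by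
  induction w generalizing k b with
  | nil => trivial
  | cons a w ih =>
    simp only [survives_cons] at h
    cases a with
    | letter =>
      exact ih (k := k + 1) fun i => by simpa [bitStep] using h i
    | inc =>
      have step_rest (i : Fin n) : ∃ x, incBit i k (b i) = some x ∧ Survives i (0, x) w := by
        simpa only [bitStep, Option.map_eq_some_iff, exists_exists_and_eq_and] using h i
      choose b' step rest using step_rest
      rw [IsCounterRun, ← ofBits_eq_add_one_of_incBit step]
      exact ih rest
    | dec =>
      have step_rest (i : Fin n) : ∃ x, decBit i k (b i) = some x ∧ Survives i (0, x) w := by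
        simpa only [bitStep, Option.map_eq_some_iff, exists_exists_and_eq_and] using h i
      choose b' step rest using step_rest
      exact ⟨_, ofBits_eq_add_one_of_incBit fun i => decBit_eq_some_iff.1 (step i), ih rest⟩
    | bit =>
      have step_rest (i : Fin n) : b i = false ∧ Survives i (k, b i) w := by
        cases hb : b i <;> simpa [bitStep, hb] using h i
      exact ⟨ofBits_eq_zero_iff.2 fun i => (step_rest i).1, ih fun i => (step_rest i).2⟩

/-! ### The pushdown automaton -/

/-- States of the traversal automaton: about to traverse a subtree (`down`), having traversed it
(`up`), or between the two children of a node (`mid`). -/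
inductive State where
  | down
  | up
  | mid
deriving DecidableEq

instance : Fintype State := ⟨{.down, .up, .mid}, fun q => by cases q <;> simp⟩

instance : Nonempty State := ⟨.down⟩

/-- Transitions of the traversal automaton. The stack records, for each ancestor of the current
node, whether the path continues into its first (`false`) or its second (`true`) child. -/
inductive Transition : State × Option (CtrSym Unit) × StackOp Bool × State → Prop where
  | letterDown : Transition (.down, some (.letter ()), .nop, .down)
  | enterFirst : Transition (.down, some .dec, .push false, .down)
  | leaf (b : Bool) : Transition (.down, some (.bit b), .nop, .up)
  | leaveFirst : Transition (.up, none, .pop false, .mid)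
  | enterSecond : Transition (.mid, none, .push true, .down)
  | letterUp : Transition (.up, some (.letter ()), .nop, .up)
  | leaveSecond : Transition (.up, some .inc, .pop true, .up)

/-- The automaton that traverses full binary trees in depth-first order. -/
def traversalPDA : PDA State Bool (CtrSym Unit) where
  trans := {t | Transition t}
  start := .down
  final := {.up}

/-! ### Common words are long -/

/-- The number of symbols other than `letter` in a traversal of the full binary tree of height
`v`. -/
def traversalLength : ℕ → ℕ
  | 0 => 1
  | v + 1 => 2 * traversalLength v + 2

theorem traversalLength_add_two (v : ℕ) : traversalLength v + 2 = 3 * 2 ^ v := by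
  induction v with
  | zero => rfl
  | succ v ih => rw [traversalLength, pow_succ]; omega

/-- The number of symbols other than `letter` still to be read after the traversal of a subtree of
height `v` whose path to the root, innermost edge first, is `s`. -/
def returnLength : List Bool → ℕ → ℕ
  | [], _ => 0
  | false :: s, v => traversalLength v + 1 + returnLength s (v + 1)
  | true :: s, v => 1 + returnLength s (v + 1)

/-- The number of symbols other than `letter` that a traversal reads from a configuration with
counter value `v` until its end. In the state `mid` the stack is that of the parent, but the counter
still holds the height of the children. -/
def remainingLength : State × List Bool → ℕ → ℕ
  | (.down, s), v => traversalLength v + returnLength s v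
  | (.up, s), v => returnLength s v
  | (.mid, s), v => traversalLength v + 1 + returnLength s (v + 1)

theorem remainingLength_le_length {c : State × List Bool} {w : List (CtrSym Unit)}
    (h : traversalPDA.Reaches c w (.up, [])) {v : ℕ} (hw : IsCounterRun v w) :
    remainingLength c v ≤ w.length := by
  induction h using PDA.Reaches.head_induction generalizing v with
  | refl => simp [remainingLength, returnLength]
  | head ht hop _ ih =>
    cases ht <;> simp only [StackOp.apply] at hop <;> subst hop <;>
      simp only [Option.toList_some, Option.toList_none, List.nil_append, List.cons_append,
        List.length_cons, IsCounterRun] at hw ⊢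
    case letterDown | letterUp => exact (ih hw).trans (Nat.le_succ _)
    case enterFirst =>
      obtain ⟨u, rfl, hw⟩ := hw
      have := ih hw
      simp only [remainingLength, returnLength, traversalLength] at this ⊢
      omega
    case leaf =>
      obtain ⟨rfl, hw⟩ := hw
      have := ih hw
      simp only [remainingLength, traversalLength] at this ⊢
      omega
    case leaveFirst => exact ih hw
    case enterSecond | leaveSecond =>
      have := ih hw
      simp only [remainingLength, returnLength] at this ⊢
      omega

theorem two_pow_two_pow_le_length {n : ℕ} [NeZero n] {w : List (CtrSym Unit)}
    (hP : w ∈ traversalPDA.language) (hB : ∀ i : Fin n, w ∈ (bitDFA i).accepts) :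
    2 ^ 2 ^ n ≤ w.length := by
  obtain ⟨_, rfl, traversal⟩ := PDA.mem_language_iff.1 hP
  have counter_run : IsCounterRun (2 ^ n - 1) w :=
    ofBits_true ▸ isCounterRun_ofBits (k := (0 : Fin n)) (b := fun _ => true) hB
  have long : traversalLength (2 ^ n - 1) ≤ w.length :=
    remainingLength_le_length traversal counter_run
  obtain ⟨v, hv⟩ : ∃ v, 2 ^ n = v + 2 :=
    Nat.exists_eq_add_of_le' (Nat.le_self_pow (NeZero.ne n) 2)
  rw [hv] at long ⊢
  calc
    2 ^ (v + 2) ≤ 3 * 2 ^ (v + 1) - 2 := by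
      have := Nat.one_le_two_pow (n := v)
      rw [pow_succ, pow_succ]
      omega
    _ = traversalLength (v + 1) := by rw [← traversalLength_add_two, Nat.add_sub_cancel]
    _ ≤ w.length := long

/-! ### A common word exists -/

/-- The word of a traversal below a node, given the word `w` of a traversal below each of its
children and the highest bit `k` that differs between the heights of the node and its children. -/
def nodeWord (k : ℕ) (w : List (CtrSym Unit)) : List (CtrSym Unit) :=
  List.replicate k (.letter ()) ++ [.dec] ++ w ++ w ++ List.replicate k (.letter ()) ++ [.inc]

theorem Transition.reaches {q q' : State} {a : Option (CtrSym Unit)} {op : StackOp Bool}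
    {s s' : List Bool} (ht : Transition (q, a, op, q')) (hop : op.apply s s') :
    traversalPDA.Reaches (q, s) a.toList (q', s') :=
  .single ht hop

theorem reaches_letters {q : State} (hq : Transition (q, some (.letter ()), .nop, q))
    (s : List Bool) (m : ℕ) :
    traversalPDA.Reaches (q, s) (List.replicate m (.letter ())) (q, s) := by
  induction m with
  | zero => exact .refl _
  | succ m ih => exact (hq.reaches rfl).trans ih

theorem reaches_nodeWord {w : List (CtrSym Unit)}
    (hw : ∀ s, traversalPDA.Reaches (.down, s) w (.up, s)) (k : ℕ) (s : List Bool) :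
    traversalPDA.Reaches (.down, s) (nodeWord k w) (.up, s) := by
  have enter : traversalPDA.Reaches (.down, s) [.dec] (.down, false :: s) :=
    Transition.enterFirst.reaches rfl
  have second : traversalPDA.Reaches (.up, false :: s) w (.up, true :: s) :=
    (Transition.leaveFirst.reaches rfl).trans ((Transition.enterSecond.reaches rfl).trans (hw _))
  have leave : traversalPDA.Reaches (.up, true :: s) [.inc] (.up, s) :=
    Transition.leaveSecond.reaches rfl
  exact (reaches_letters .letterDown s k).trans enter |>.trans (hw _) |>.trans second
    |>.trans (reaches_letters .letterUp _ k) |>.trans leave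

variable {n : ℕ} [NeZero n]

theorem bitDFA_evalFrom_nodeWord {i k : Fin n} {b b' : Bool} (hb : decBit i k b = some b')
    {w : List (CtrSym Unit)}
    (hw : (bitDFA i).evalFrom (some (0, b')) w = some (0, b')) :
    (bitDFA i).evalFrom (some (0, b)) (nodeWord k w) = some (0, b) := by
  have announce (x : Bool) : (bitDFA i).evalFrom (some (0, x))
      (List.replicate k.val (.letter ())) = some (k, x) := by
    rw [bitDFA_evalFrom_letters, Fin.ofNat_val_eq_self, zero_add]
  have dec_eval : (bitDFA i).evalFrom (some (k, b)) [.dec] = some (0, b') := by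
    simp [bitDFA_step_some, bitStep, hb]
  have inc_eval : (bitDFA i).evalFrom (some (k, b')) [.inc] = some (0, b) := by
    simp [bitDFA_step_some, bitStep, decBit_eq_some_iff.1 hb]
  simp only [nodeWord, DFA.evalFrom_of_append, announce, dec_eval, hw, inc_eval]

theorem exists_traversal (v : ℕ) (b : Fin n → Bool) (hb : Nat.ofBits b = v) :
    ∃ w, (∀ s, traversalPDA.Reaches (.down, s) w (.up, s)) ∧
      ∀ i, (bitDFA i).evalFrom (some (0, b i)) w = some (0, b i) := by
  induction v generalizing b with
  | zero =>
    rw [ofBits_eq_zero_iff] at hb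
    refine ⟨[.bit false], fun s => (Transition.leaf false).reaches rfl, fun i => ?_⟩
    simp [bitDFA_step_some, bitStep, hb]
  | succ v ih =>
    obtain ⟨k, b', step⟩ := exists_decBit (b := b) (by omega)
    have := ofBits_eq_add_one_of_incBit fun i => decBit_eq_some_iff.1 (step i)
    obtain ⟨w, reaches, eval⟩ := ih b' (by omega)
    exact ⟨nodeWord k w, reaches_nodeWord reaches k,
      fun i => bitDFA_evalFrom_nodeWord (step i) (eval i)⟩

theorem exists_common_word :
    ∃ w ∈ traversalPDA.language, ∀ i : Fin n, w ∈ (bitDFA i).accepts := by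
  obtain ⟨w, reaches, eval⟩ := exists_traversal _ (fun _ : Fin n => true) rfl
  refine ⟨w, ⟨.up, rfl, reaches []⟩, fun i => ?_⟩
  change (bitDFA i).evalFrom (some (0, true)) w ≠ none
  simp [eval i]

end TreeTraversal

open TreeTraversal

theorem shortest_word_double_exponential_general {p g : ℕ} (hp : 3 ≤ p) (hg : 2 ≤ g) :
    ∃ P : PDA (Fin p) (Fin g) (CtrSym Unit), ∀ n m : ℕ, 1 ≤ n → 2 * n + 1 ≤ m →
      ∃ Bs : Fin n → DFA (CtrSym Unit) (Fin m),
        (∃ w : List (CtrSym Unit), w ∈ P.language ∧ ∀ i, w ∈ (Bs i).accepts) ∧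
        ∀ w : List (CtrSym Unit), w ∈ P.language → (∀ i, w ∈ (Bs i).accepts) →
          2 ^ (2 ^ n) ≤ w.length := by
  obtain ⟨_, _, hState⟩ := exists_leftInverse_fin_of_card_le (Q := State) hp
  obtain ⟨_, _, hStack⟩ := exists_leftInverse_fin_of_card_le (Q := Bool) hg
  obtain ⟨P, hP⟩ := traversalPDA.exists_language_eq_of_leftInverse hState hStack
  refine ⟨P, fun n m hn hm => ?_⟩
  have : NeZero n := ⟨by omega⟩
  obtain ⟨_, _, hBit⟩ := exists_leftInverse_fin_of_card_le (Q := Option (Fin n × Bool)) (m := m)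
    (by simp; omega)
  choose Bs hBs using fun i : Fin n => exists_dfa_accepts_eq_of_leftInverse (bitDFA i) hBit
  exact ⟨Bs, by simpa only [hP, hBs] using
    ⟨exists_common_word, fun w => two_pow_two_pow_le_length (n := n) (w := w)⟩⟩

/-- there is a constant `c` such that for every `n ≥ 1` there are a
PDA of size at most `c·n` (states plus stack symbols) and `n` finite-state automata
with at most `c·n` states each, whose intersection is nonempty but whose shortest
common word has length at least `2^(2^n)`. -/
theorem shortest_word_double_exponential :
    ∃ c : ℕ, ∀ n : ℕ, 1 ≤ n →
      ∃ (P : PDA (Fin (c * n)) (Fin (c * n)) (CtrSym Unit))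
        (Bs : Fin n → DFA (CtrSym Unit) (Fin (c * n))),
        (∃ w : List (CtrSym Unit), w ∈ P.language ∧ ∀ i, w ∈ (Bs i).accepts) ∧
        ∀ w : List (CtrSym Unit), w ∈ P.language → (∀ i, w ∈ (Bs i).accepts) →
          2 ^ (2 ^ n) ≤ w.length := by
  refine ⟨3, fun n hn => ?_⟩
  obtain ⟨P, hP⟩ := shortest_word_double_exponential_general (p := 3 * n) (g := 3 * n)
    (by omega) (by omega)
  exact ⟨P, hP n (3 * n) hn (by omega)⟩
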